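/- arXiv:math/0409468 — 13 statements merged into one kernel-verified Lean document; each statement's English description precedes it below -/
import Mathlib

section
/- Let M be a magic square of order 3. Then there exists a transformation g in the dihedral group of order 8 (generated by rotation by 90 degrees and reflection, acting on the entries of a 3×3 matrix) and nonnegative integers i, j, k such that g applied to M equals either T₁ + i·A + j·B + k·C or T₂ + i·A + j·B + k·D. -/
open Matrix Finset

/-- `IsMagic M m` : every row sum, column sum, and both diagonal sums of the
3×3 matrix `M` of nonnegative integers equal `m`, and all entries are distinct. -/
def IsMagic (M : Matrix (Fin 3) (Fin 3) ℕ) (m : ℕ) : Prop :=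
  (Function.Injective fun p : Fin 3 × Fin 3 => M p.1 p.2) ∧
  (∀ i, ∑ j, M i j = m) ∧
  (∀ j, ∑ i, M i j = m) ∧
  (∑ i, M i i = m) ∧
  (∑ i, M i i.rev = m)

/-- A magic square of order 3. -/
def IsMagicSquare (M : Matrix (Fin 3) (Fin 3) ℕ) : Prop := ∃ m, IsMagic M m

/-- Rotation by 90 degrees acting on 3×3 matrices. -/
def rot (M : Matrix (Fin 3) (Fin 3) ℕ) : Matrix (Fin 3) (Fin 3) ℕ :=
  Matrix.of fun i j => M j.rev i

/-- Reflection acting on 3×3 matrices. -/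
def reflect (M : Matrix (Fin 3) (Fin 3) ℕ) : Matrix (Fin 3) (Fin 3) ℕ :=
  Matrix.of fun i j => M i j.rev

/-- The dihedral group of order 8 generated by `rot` and `reflect`, as a set of
transformations of 3×3 matrices. -/
def Dih8 : Set (Matrix (Fin 3) (Fin 3) ℕ → Matrix (Fin 3) (Fin 3) ℕ) :=
  {g | ∃ n ≤ 3, g = rot^[n] ∨ g = rot^[n] ∘ reflect}

def A : Matrix (Fin 3) (Fin 3) ℕ := !![1,1,1; 1,1,1; 1,1,1]
def B : Matrix (Fin 3) (Fin 3) ℕ := !![5,0,4; 2,3,4; 2,6,1]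
def C : Matrix (Fin 3) (Fin 3) ℕ := !![2,0,1; 0,1,2; 1,2,0]
def D : Matrix (Fin 3) (Fin 3) ℕ := !![3,0,3; 2,2,2; 1,4,1]
def T1 : Matrix (Fin 3) (Fin 3) ℕ := !![7,0,5; 2,4,6; 3,8,1]
def T2 : Matrix (Fin 3) (Fin 3) ℕ := !![8,0,7; 4,5,6; 3,10,2]

/-- The set of square entries conditions is preserved by rotation. -/
lemma isMagic_rot {M : Matrix (Fin 3) (Fin 3) ℕ} {m : ℕ} (h : IsMagic M m) :
    IsMagic (rot M) m := by
  obtain ⟨h0, h1, h2, h3, h4⟩ := h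
  refine ⟨?_, ?_, ?_, ?_, ?_⟩
  · rintro ⟨a, b⟩ ⟨c, d⟩ hh
    have := @h0 (b.rev, a) (d.rev, c) hh
    simp only [Prod.mk.injEq, Fin.rev_inj] at this
    simp [this]
  · intro i
    have := h2 i
    simp [rot, Fin.sum_univ_three, Fin.rev] at this ⊢
    omega
  · intro j
    have := h1 j.rev
    simpa [rot] using this
  · simp [rot, Fin.sum_univ_three, Fin.rev] at h4 ⊢
    omega
  · simp [rot, Fin.sum_univ_three, Fin.rev] at h3 ⊢
    omega

lemma isMagic_reflect {M : Matrix (Fin 3) (Fin 3) ℕ} {m : ℕ} (h : IsMagic M m) :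
    IsMagic (reflect M) m := by
  obtain ⟨h0, h1, h2, h3, h4⟩ := h
  refine ⟨?_, ?_, ?_, ?_, ?_⟩
  · rintro ⟨a, b⟩ ⟨c, d⟩ hh
    have := @h0 (a, b.rev) (c, d.rev) hh
    simp only [Prod.mk.injEq, Fin.rev_inj] at this
    simp [this]
  · intro i
    have := h1 i
    simp [reflect, Fin.sum_univ_three, Fin.rev] at this ⊢
    omega
  · intro j
    have := h2 j.rev
    simpa [reflect] using this
  · simp [reflect, Fin.sum_univ_three, Fin.rev] at h4 ⊢
    omega
  · simp [reflect, Fin.sum_univ_three, Fin.rev] at h3 ⊢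
    omega

/-- The normalised case: the top left corner is the largest one and the top right corner
exceeds the bottom left one. -/
lemma normalised_case {M : Matrix (Fin 3) (Fin 3) ℕ} {m : ℕ} (h : IsMagic M m)
    (hx : M 0 2 < M 0 0) (hy : M 2 0 < M 0 2) :
    ∃ i j k : ℕ, M = T1 + i • A + j • B + k • C ∨ M = T2 + i • A + j • B + k • D := by
  obtain ⟨h0, h1, h2, h3, h4⟩ := h
  have hne : M 0 2 ≠ M 1 2 := fun e => by
    have := @h0 (0, 2) (1, 2) e
    simp at this
  have r0 := h1 0
  have r1 := h1 1
  have r2 := h1 2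
  have c0 := h2 0
  have c1 := h2 1
  have c2 := h2 2
  simp [Fin.sum_univ_three, Fin.rev] at r0 r1 r2 c0 c1 c2 h3 h4
  rcases lt_or_gt_of_ne hne with hlt | hgt
  · refine ⟨M 0 1, M 0 2 - M 1 1 - 1, M 1 2 - M 0 2 - 1, Or.inl ?_⟩
    ext a b
    fin_cases a <;> fin_cases b <;> simp [T1, A, B, C] <;> omega
  · refine ⟨M 0 1, M 0 0 - M 0 2 - 1, M 0 2 - M 1 2 - 1, Or.inr ?_⟩
    ext a b
    fin_cases a <;> fin_cases b <;> simp [T2, A, B, D] <;> omega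

/-- One of the eight images of a magic square is normalised. -/
lemma exists_normalised {M : Matrix (Fin 3) (Fin 3) ℕ} {m : ℕ} (h : IsMagic M m) :
    ∃ g ∈ Dih8, (g M) 0 2 < (g M) 0 0 ∧ (g M) 2 0 < (g M) 0 2 := by
  obtain ⟨h0, h1, h2, h3, h4⟩ := h
  have e1 : M 0 0 ≠ M 0 2 := fun e => by
    have := @h0 (0, 0) (0, 2) e
    simp at this
  have e2 : M 0 0 ≠ M 2 0 := fun e => by
    have := @h0 (0, 0) (2, 0) e
    simp at this
  have e3 : M 0 0 ≠ M 2 2 := fun e => by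
    have := @h0 (0, 0) (2, 2) e
    simp at this
  have e4 : M 0 2 ≠ M 2 0 := fun e => by
    have := @h0 (0, 2) (2, 0) e
    simp at this
  simp [Fin.sum_univ_three, Fin.rev] at h3 h4
  by_contra hcon
  push Not at hcon
  have k (n : ℕ) (hn : n ≤ 3) := hcon (rot^[n]) ⟨n, hn, Or.inl rfl⟩
  have l (n : ℕ) (hn : n ≤ 3) := hcon (rot^[n] ∘ reflect) ⟨n, hn, Or.inr rfl⟩
  have k0 := k 0 (by norm_num)
  have k1 := k 1 (by norm_num)
  have k2 := k 2 (by norm_num)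
  have k3 := k 3 (by norm_num)
  have l0 := l 0 (by norm_num)
  have l1 := l 1 (by norm_num)
  have l2 := l 2 (by norm_num)
  have l3 := l 3 (by norm_num)
  simp [rot, reflect, Fin.rev] at k0 k1 k2 k3 l0 l1 l2 l3
  omega

lemma isMagic_iterate {M : Matrix (Fin 3) (Fin 3) ℕ} {m : ℕ} (h : IsMagic M m) (n : ℕ) :
    IsMagic (rot^[n] M) m := by
  induction n with
  | zero => exact h
  | succ n ih => rw [Function.iterate_succ_apply']; exact isMagic_rot ih

/-- Every magic square of order 3, after applying a suitable element of the
dihedral group of order 8, is of the form `T₁ + i·A + j·B + k·C` or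
`T₂ + i·A + j·B + k·D` with `i, j, k` nonnegative integers. -/
theorem every_magic_square_of_two_types (M : Matrix (Fin 3) (Fin 3) ℕ)
    (hM : IsMagicSquare M) :
    ∃ g ∈ Dih8, ∃ i j k : ℕ,
      g M = T1 + i • A + j • B + k • C ∨ g M = T2 + i • A + j • B + k • D := by
  obtain ⟨m, hm⟩ := hM
  obtain ⟨g, hg, hx, hy⟩ := exists_normalised hm
  have hgm : IsMagic (g M) m := by
    obtain ⟨n, -, rfl | rfl⟩ := hg
    · exact isMagic_iterate hm n
    · exact isMagic_iterate (isMagic_reflect hm) n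
  exact ⟨g, hg, normalised_case hgm hx hy⟩
end

section
/- The matrices of the form T₁ + i·A + j·B + k·C and T₂ + i'·A + j'·B + k'·D, where i, j, k, i', j', k' range over all nonnegative integers, are pairwise distinct; that is, T₁ + i·A + j·B + k·C = T₁ + i'·A + j'·B + k'·C implies (i,j,k) = (i',j',k'), T₂ + i·A + j·B + k·D = T₂ + i'·A + j'·B + k'·D implies (i,j,k) = (i',j',k'), and no matrix of the first form equals a matrix of the second form. -/
open Matrix

/-- The matrices `T₁ + i·A + j·B + k·C` and `T₂ + i'·A + j'·B + k'·D` are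
pairwise distinct as `i, j, k, i', j', k'` range over the nonnegative integers. -/
theorem two_types_pairwise_distinct :
    (∀ i j k i' j' k' : ℕ,
      T1 + i • A + j • B + k • C = T1 + i' • A + j' • B + k' • C →
        i = i' ∧ j = j' ∧ k = k') ∧
    (∀ i j k i' j' k' : ℕ,
      T2 + i • A + j • B + k • D = T2 + i' • A + j' • B + k' • D →
        i = i' ∧ j = j' ∧ k = k') ∧
    (∀ i j k i' j' k' : ℕ,
      T1 + i • A + j • B + k • C ≠ T2 + i' • A + j' • B + k' • D) := by
  refine ⟨?_, ?_, ?_⟩ <;> intro i j k i' j' k' h <;>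
  · have h01 := congrFun (congrFun h 0) 1
    have h00 := congrFun (congrFun h 0) 0
    have h02 := congrFun (congrFun h 0) 2
    have h10 := congrFun (congrFun h 1) 0
    simp only [Matrix.add_apply, Matrix.smul_apply, smul_eq_mul] at h01 h00 h02 h10
    simp [A, B, C, D, T1, T2] at h01 h00 h02 h10
    omega
end

section
/- For every nonnegative integer s, the number of magic squares of order 3 with magic number 3s equals 2s² − (20/3)s + 1 − (−1)^s + (8/3)(s mod 3); equivalently, three times this number equals 6s² − 20s + 3 − 3·(−1)^s + 8·(s mod 3). -/
open Matrix Finset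

/-- Parameters for the magic squares up to symmetry. -/
def magicT (s : ℕ) : Finset (ℕ × ℕ) :=
  (Finset.Icc 1 s ×ˢ Finset.Icc 1 s).filter fun p => 2 * p.1 + p.2 ≤ s ∧ p.1 ≠ p.2

theorem mem_magicT (s : ℕ) (p : ℕ × ℕ) :
    p ∈ magicT s ↔ 1 ≤ p.1 ∧ 1 ≤ p.2 ∧ 2 * p.1 + p.2 ≤ s ∧ p.1 ≠ p.2 := by
  simp only [magicT, Finset.mem_filter, Finset.mem_product, Finset.mem_Icc]
  omega

/-- The new parameters that appear at level `s + 1`. -/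
def magicShell (s : ℕ) : Finset (ℕ × ℕ) :=
  ((Finset.Icc 1 (s / 2)).filter fun b => 3 * b ≠ s + 1).image fun b => (b, s + 1 - 2 * b)

theorem magicT_succ (s : ℕ) : (magicT (s + 1)).card = (magicT s).card + (magicShell s).card := by
  rw [← Finset.card_union_of_disjoint]
  · congr 1
    ext ⟨b, c⟩
    simp only [Finset.mem_union, mem_magicT, magicShell, Finset.mem_image, Finset.mem_filter,
      Finset.mem_Icc, Prod.mk.injEq]
    constructor
    · intro h
      by_cases h2 : 2 * b + c ≤ s
      · left; omega
      · right; exact ⟨b, by omega, rfl, by omega⟩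
    · rintro (h | ⟨b', h, rfl, rfl⟩) <;> omega
  · rw [Finset.disjoint_left]
    rintro ⟨b, c⟩
    simp only [mem_magicT, magicShell, Finset.mem_image, Finset.mem_filter,
      Finset.mem_Icc, Prod.mk.injEq]
    rintro h ⟨b', h', rfl, rfl⟩
    omega

theorem magicShell_card (s : ℕ) :
    (magicShell s).card + (if s % 3 = 2 then 1 else 0) = s / 2 := by
  rw [magicShell, Finset.card_image_of_injective]
  swap
  · intro a b h
    exact (Prod.mk.inj h).1
  split_ifs with h
  · have : ((Finset.Icc 1 (s / 2)).filter fun b => 3 * b ≠ s + 1)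
        = (Finset.Icc 1 (s / 2)).erase ((s + 1) / 3) := by
      ext b
      simp only [Finset.mem_filter, Finset.mem_erase, Finset.mem_Icc]
      omega
    rw [this, Finset.card_erase_of_mem (by rw [Finset.mem_Icc]; omega), Nat.card_Icc]
    omega
  · rw [Finset.filter_true_of_mem (by intro b _; omega), Nat.card_Icc]
    omega

theorem magicT_card (s : ℕ) :
    (24 : ℤ) * (magicT s).card =
      6 * (s : ℤ) ^ 2 - 20 * (s : ℤ) + 3 - 3 * (-1) ^ s + 8 * ((s % 3 : ℕ) : ℤ) := by
  induction s with
  | zero => simp [magicT]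
  | succ s ih =>
    have h := magicShell_card s
    rw [magicT_succ]
    have e : (6 * ((s + 1 : ℕ) : ℤ) ^ 2) = 6 * (s : ℤ) ^ 2 + 12 * s + 6 := by push_cast; ring
    rw [e, pow_succ (-1 : ℤ) s]
    clear e
    generalize (6 * (s : ℤ) ^ 2) = q at ih ⊢
    rcases Nat.even_or_odd s with hs | hs
    · rw [hs.neg_one_pow] at ih ⊢
      rw [Nat.even_iff] at hs
      split_ifs at h <;> omega
    · rw [hs.neg_one_pow] at ih ⊢
      rw [Nat.odd_iff] at hs
      split_ifs at h <;> omega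

/-- The symmetries acting on parameters. -/
def magicSym (q : (Bool × Bool × Bool) × (ℕ × ℕ)) : ℤ × ℤ :=
  let a : ℤ := if q.1.1 then (q.2.1 + q.2.2 : ℤ) else -(q.2.1 + q.2.2 : ℤ)
  let b : ℤ := if q.1.2.1 then (q.2.1 : ℤ) else -(q.2.1 : ℤ)
  if q.1.2.2 then (a, b) else (b, a)

/-- Admissible integer parameters. -/
def MagicP (s : ℕ) (p : ℤ × ℤ) : Prop :=
  (p.1 + p.2 ≤ s ∧ p.1 - p.2 ≤ s ∧ p.2 - p.1 ≤ s ∧ -p.1 - p.2 ≤ s) ∧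
  p.1 ≠ 0 ∧ p.2 ≠ 0 ∧ p.1 ≠ p.2 ∧ p.1 ≠ -p.2 ∧ p.1 ≠ 2 * p.2 ∧ p.1 ≠ -2 * p.2 ∧
  p.2 ≠ 2 * p.1 ∧ p.2 ≠ -2 * p.1

theorem magicP_eq (s : ℕ) :
    {p | MagicP s p} =
      (((Finset.univ ×ˢ magicT s).image magicSym : Finset (ℤ × ℤ)) : Set (ℤ × ℤ)) := by
  ext ⟨a, b⟩
  simp only [Set.mem_ofPred_eq, Finset.coe_image, Set.mem_image, Finset.mem_coe,
    Finset.mem_product, Finset.mem_univ, true_and, mem_magicT]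
  constructor
  · intro h
    simp only [MagicP] at h
    by_cases hab : b.natAbs ≤ a.natAbs
    · refine ⟨((decide (0 ≤ a), decide (0 ≤ b), true), (b.natAbs, a.natAbs - b.natAbs)), ?_, ?_⟩
      · dsimp only; omega
      · simp only [magicSym, decide_eq_true_eq, if_true, Prod.mk.injEq]
        constructor <;> split_ifs <;> omega
    · refine ⟨((decide (0 ≤ b), decide (0 ≤ a), false), (a.natAbs, b.natAbs - a.natAbs)), ?_, ?_⟩
      · dsimp only; omega
      · simp only [magicSym, decide_eq_true_eq, Bool.false_eq_true, if_false, Prod.mk.injEq]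
        constructor <;> split_ifs <;> omega
  · rintro ⟨⟨⟨x, y, z⟩, ⟨c, d⟩⟩, h, e⟩
    cases x <;> cases y <;> cases z <;>
      simp [magicSym] at e h <;> simp only [MagicP] <;> omega

theorem magicSym_inj (s : ℕ) :
    Set.InjOn magicSym ((Finset.univ ×ˢ magicT s : Finset ((Bool × Bool × Bool) × (ℕ × ℕ))) :
      Set ((Bool × Bool × Bool) × (ℕ × ℕ))) := by
  rintro ⟨⟨x, y, z⟩, ⟨c, d⟩⟩ h ⟨⟨x', y', z'⟩, ⟨c', d'⟩⟩ h' e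
  simp only [Finset.mem_coe, Finset.mem_product, Finset.mem_univ, true_and, mem_magicT] at h h'
  cases x <;> cases y <;> cases z <;> cases x' <;> cases y' <;> cases z' <;>
    simp [magicSym] at e ⊢ <;> omega

theorem magicP_ncard (s : ℕ) : {p | MagicP s p}.ncard = 8 * (magicT s).card := by
  rw [magicP_eq, Set.ncard_coe_finset, Finset.card_image_of_injOn (magicSym_inj s),
    Finset.card_product]
  rfl

/-- The square with given parameters. -/
def magicMk (s : ℕ) (p : ℤ × ℤ) : Matrix (Fin 3) (Fin 3) ℕ :=
  !![(s + p.1).toNat, (s - p.1 - p.2).toNat, (s + p.2).toNat;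
     (s - p.1 + p.2).toNat, s, (s + p.1 - p.2).toNat;
     (s - p.2).toNat, (s + p.1 + p.2).toNat, (s - p.1).toNat]

theorem magicMk_inj (s : ℕ) : Set.InjOn (magicMk s) {p | MagicP s p} := by
  rintro ⟨a, b⟩ h ⟨a', b'⟩ h' e
  simp only [Set.mem_ofPred_eq, MagicP] at h h'
  have e1 := congrFun (congrFun e 0) 0
  have e2 := congrFun (congrFun e 0) 2
  simp [magicMk] at e1 e2
  rw [Prod.mk.injEq]
  omega

theorem magic_eq_image (s : ℕ) :
    {M : Matrix (Fin 3) (Fin 3) ℕ | IsMagic M (3 * s)} = magicMk s '' {p | MagicP s p} := by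
  ext M
  simp only [Set.mem_ofPred_eq, Set.mem_image]
  constructor
  · rintro ⟨hi, hr, hc, hd, ha⟩
    have ne : ∀ i j k l : Fin 3, (i, j) ≠ (k, l) → M i j ≠ M k l := fun i j k l h h' => h (hi h')
    have n1 := ne 0 0 1 1 (by decide)
    have n2 := ne 0 2 1 1 (by decide)
    have n3 := ne 0 0 0 2 (by decide)
    have n4 := ne 0 1 1 1 (by decide)
    have n5 := ne 1 2 0 2 (by decide)
    have n6 := ne 2 0 2 1 (by decide)
    have n7 := ne 1 0 0 0 (by decide)
    have n8 := ne 2 1 2 2 (by decide)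
    have r0 := hr 0
    have r1 := hr 1
    have r2 := hr 2
    have c0 := hc 0
    have c1 := hc 1
    have c2 := hc 2
    have v0 : Fin.rev (0 : Fin 3) = 2 := rfl
    have v1 : Fin.rev (1 : Fin 3) = 1 := rfl
    have v2 : Fin.rev (2 : Fin 3) = 0 := rfl
    simp only [Fin.sum_univ_three, v0, v1, v2] at r0 r1 r2 c0 c1 c2 hd ha
    refine ⟨((M 0 0 : ℤ) - s, (M 0 2 : ℤ) - s), ?_, ?_⟩
    · simp only [MagicP]
      omega
    · ext i j
      fin_cases i <;> fin_cases j <;> simp [magicMk] <;> omega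
  · rintro ⟨⟨a, b⟩, h, rfl⟩
    simp only [MagicP] at h
    refine ⟨?_, ?_, ?_, ?_, ?_⟩
    · rintro ⟨i, j⟩ ⟨k, l⟩ e
      fin_cases i <;> fin_cases j <;> fin_cases k <;> fin_cases l <;>
        simp [magicMk] at e ⊢ <;> omega
    · intro i
      fin_cases i <;> simp [magicMk, Fin.sum_univ_three] <;> omega
    · intro i
      fin_cases i <;> simp [magicMk, Fin.sum_univ_three] <;> omega
    · simp [magicMk, Fin.sum_univ_three]; omega
    · have v0 : Fin.rev (0 : Fin 3) = 2 := rfl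
      have v1 : Fin.rev (1 : Fin 3) = 1 := rfl
      have v2 : Fin.rev (2 : Fin 3) = 0 := rfl
      simp only [Fin.sum_univ_three, v0, v1, v2]
      simp [magicMk]; omega

/-- The number of magic squares of order 3 with magic number `3s` is
`2s² − (20/3)s + 1 − (−1)^s + (8/3)(s mod 3)`; stated with denominators
cleared: three times the count equals
`6s² − 20s + 3 − 3·(−1)^s + 8·(s mod 3)`. -/
theorem count_magic_squares (s : ℕ) :
    (3 : ℤ) * {M : Matrix (Fin 3) (Fin 3) ℕ | IsMagic M (3 * s)}.ncard =
      6 * (s : ℤ) ^ 2 - 20 * (s : ℤ) + 3 - 3 * (-1) ^ s + 8 * ((s % 3 : ℕ) : ℤ) := by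
  rw [magic_eq_image, Set.InjOn.ncard_image (magicMk_inj s), magicP_ncard, ← magicT_card]
  push_cast
  ring
end

section
/- Let c : ℕ → ℕ be the function where c(s) is the number of magic squares of order 3 with magic number 3s. Then, as an identity of formal power series in t over the integers, (1−t)·(1−t²)·(1−t³)·(Σ_{s≥0} c(s)·t^s) = 8t⁴·(1+2t). -/
open Matrix Finset

/-- Values `b` with `0 < b < n - b` and `n - b ≠ 2 b`. -/
def magD (n : ℕ) : Finset ℕ := (Finset.Icc 1 ((n - 1) / 2)).filter (fun b => 3 * b ≠ n)

/-- Offsets `(x, y)` of the first-row corners from the centre. -/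
noncomputable def magT (s : ℕ) : Finset (ℤ × ℤ) :=
  (Finset.Icc (-(s : ℤ)) s ×ˢ Finset.Icc (-(s : ℤ)) s).filter (fun p =>
    p.1 + p.2 ≤ s ∧ p.1 - p.2 ≤ s ∧ p.2 - p.1 ≤ s ∧ - p.1 - p.2 ≤ s ∧
    p.1 ≠ 0 ∧ p.2 ≠ 0 ∧ p.1 ≠ p.2 ∧ p.1 ≠ - p.2 ∧ p.1 ≠ 2 * p.2 ∧ p.1 ≠ -2 * p.2 ∧
    p.2 ≠ 2 * p.1 ∧ p.2 ≠ -2 * p.1)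

/-- The square with centre `s` and offsets `(x, y)`. -/
def magG (s : ℕ) (p : ℤ × ℤ) : Matrix (Fin 3) (Fin 3) ℕ :=
  !![(s + p.1).toNat, (s - p.1 - p.2).toNat, (s + p.2).toNat;
     (s + p.2 - p.1).toNat, s, (s + p.1 - p.2).toNat;
     (s - p.2).toNat, (s + p.1 + p.2).toNat, (s - p.1).toNat]

/-- Signed and swapped pairs. -/
def magF (q : (Σ _ : ℕ, ℕ) × Bool × Bool × Bool) : ℤ × ℤ :=
  let a : ℤ := (q.1.1 : ℤ) - q.1.2
  let b : ℤ := q.1.2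
  let u : ℤ := if q.2.1 then a else -a
  let v : ℤ := if q.2.2.1 then b else -b
  if q.2.2.2 then (u, v) else (v, u)

theorem magD_card (n : ℕ) : (magD n).card = (n - 1) / 2 - (if n % 3 = 0 then 1 else 0) := by
  unfold magD
  by_cases h : n % 3 = 0
  · have : (Finset.Icc 1 ((n - 1) / 2)).filter (fun b => 3 * b ≠ n)
        = (Finset.Icc 1 ((n - 1) / 2)).erase (n / 3) := by
      ext b
      simp only [Finset.mem_filter, Finset.mem_erase, Finset.mem_Icc]
      omega
    rw [this, if_pos h]
    rcases Nat.eq_zero_or_pos n with h0 | h0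
    · subst h0; simp
    · rw [Finset.card_erase_of_mem (by simp only [Finset.mem_Icc]; omega)]
      simp
  · rw [Finset.filter_true_of_mem (by intro b _; omega), if_neg h]
    simp

theorem magT_card (s : ℕ) : (magT s).card = 8 * ∑ n ∈ Finset.range (s + 1), (magD n).card := by
  rw [← Finset.card_sigma]
  have : ((((Finset.range (s + 1)).sigma magD) ×ˢ
      (Finset.univ : Finset (Bool × Bool × Bool))).card)
      = 8 * ((Finset.range (s + 1)).sigma magD).card := by
    rw [Finset.card_product, mul_comm]; simp
  rw [← this]
  symm
  apply Finset.card_nbij magF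
  · rintro ⟨⟨n, b⟩, e1, e2, e3⟩ h
    simp only [Finset.coe_product, Set.mem_prod, Finset.mem_coe, Finset.mem_product, Finset.mem_sigma, Finset.mem_range, magD, Finset.mem_filter,
      Finset.mem_Icc, Finset.mem_univ, and_true] at h
    rcases e1 <;> rcases e2 <;> rcases e3 <;>
      simp only [magF, magT, Finset.coe_filter, Set.mem_setOf_eq, Finset.mem_filter,
        Finset.mem_product, Finset.mem_Icc, if_true, if_false, Bool.false_eq_true] <;>
      refine ⟨⟨⟨?_, ?_⟩, ?_, ?_⟩, ?_, ?_, ?_, ?_, ?_, ?_, ?_, ?_, ?_, ?_, ?_, ?_⟩ <;> omega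
  · rintro ⟨⟨n, b⟩, e1, e2, e3⟩ h ⟨⟨n', b'⟩, e1', e2', e3'⟩ h' heq
    simp only [Finset.coe_product, Set.mem_prod, Finset.mem_coe, Finset.mem_sigma,
      Finset.mem_range, magD, Finset.mem_filter,
      Finset.mem_Icc, Finset.mem_univ, and_true] at h h'
    have key : n = n' ∧ b = b' ∧ e1 = e1' ∧ e2 = e2' ∧ e3 = e3' := by
      rcases e1 <;> rcases e2 <;> rcases e3 <;> rcases e1' <;> rcases e2' <;> rcases e3' <;>
      simp only [magF, if_true, if_false, Bool.false_eq_true, Prod.mk.injEq, and_true, and_false,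
        reduceCtorEq] at heq ⊢ <;> omega
    obtain ⟨rfl, rfl, rfl, rfl, rfl⟩ := key
    rfl
  · rintro ⟨x, y⟩ h
    simp only [magT, Finset.mem_coe, Finset.mem_filter, Finset.mem_product, Finset.mem_Icc] at h
    simp only [Set.mem_image, Finset.mem_coe]
    refine ⟨⟨⟨x.natAbs + y.natAbs, min x.natAbs y.natAbs⟩,
      if y.natAbs < x.natAbs then (decide (0 < x), decide (0 < y), true)
      else (decide (0 < y), decide (0 < x), false)⟩, ?_, ?_⟩
    · simp only [Finset.mem_product, Finset.mem_sigma, Finset.mem_range, magD, Finset.mem_filter,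
        Finset.mem_Icc, Finset.mem_univ, and_true]
      omega
    · by_cases hxy : y.natAbs < x.natAbs <;> by_cases hx : 0 < x <;> by_cases hy : 0 < y <;>
        simp only [magF, hxy, hx, hy, if_true, if_false, decide_true, decide_false,
          Bool.false_eq_true, Prod.mk.injEq] <;> omega

theorem mag_count (s : ℕ) :
    {M : Matrix (Fin 3) (Fin 3) ℕ | IsMagic M (3 * s)}.ncard = (magT s).card := by
  have himg : {M : Matrix (Fin 3) (Fin 3) ℕ | IsMagic M (3 * s)} = magG s '' (magT s : Set _) := by
    ext M
    simp only [Set.mem_setOf_eq, Set.mem_image, Finset.mem_coe]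
    constructor
    · rintro ⟨hinj, hr, hcol, hd, hd'⟩
      have hne : ∀ i j k l : Fin 3, (i, j) ≠ (k, l) → M i j ≠ M k l :=
        fun i j k l h e => h (hinj e)
      have r0 := hr 0
      have r1 := hr 1
      have r2 := hr 2
      have c0 := hcol 0
      have c1 := hcol 1
      have c2 := hcol 2
      have rv0 : Fin.rev (0 : Fin 3) = 2 := rfl
      have rv1 : Fin.rev (1 : Fin 3) = 1 := rfl
      have rv2 : Fin.rev (2 : Fin 3) = 0 := rfl
      simp only [Fin.sum_univ_three, rv0, rv1, rv2] at r0 r1 r2 c0 c1 c2 hd hd'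
      have n1 := hne 0 0 1 1 (by decide)
      have n2 := hne 0 2 1 1 (by decide)
      have n3 := hne 0 0 0 2 (by decide)
      have n4 := hne 0 0 2 0 (by decide)
      have n5 := hne 0 0 1 2 (by decide)
      have n6 := hne 0 0 1 0 (by decide)
      have n7 := hne 0 0 0 1 (by decide)
      have n8 := hne 0 2 0 1 (by decide)
      have n9 := hne 0 2 1 0 (by decide)
      have n10 := hne 0 2 1 2 (by decide)
      refine ⟨((M 0 0 : ℤ) - s, (M 0 2 : ℤ) - s), ?_, ?_⟩
      · simp only [magT, Finset.mem_filter, Finset.mem_product, Finset.mem_Icc]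
        refine ⟨⟨⟨?_, ?_⟩, ?_, ?_⟩, ?_, ?_, ?_, ?_, ?_, ?_, ?_, ?_, ?_, ?_, ?_, ?_⟩ <;> omega
      · ext i j
        fin_cases i <;> fin_cases j <;> simp [magG] <;> omega
    · rintro ⟨⟨x, y⟩, h, rfl⟩
      simp only [magT, Finset.mem_filter, Finset.mem_product, Finset.mem_Icc] at h
      refine ⟨?_, ?_, ?_, ?_, ?_⟩
      · rintro ⟨i, j⟩ ⟨k, l⟩ e
        fin_cases i <;> fin_cases j <;> fin_cases k <;> fin_cases l <;>
          first
          | rfl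
          | (exfalso; simp [magG] at e; omega)
      · intro i
        fin_cases i <;> simp [magG, Fin.sum_univ_three] <;> omega
      · intro i
        fin_cases i <;> simp [magG, Fin.sum_univ_three] <;> omega
      · simp [magG, Fin.sum_univ_three]; omega
      · have rv0 : Fin.rev (0 : Fin 3) = 2 := rfl
        have rv1 : Fin.rev (1 : Fin 3) = 1 := rfl
        have rv2 : Fin.rev (2 : Fin 3) = 0 := rfl
        simp only [Fin.sum_univ_three, rv0, rv1, rv2]
        simp [magG]; omega
  rw [himg, Set.ncard_image_of_injOn, Set.ncard_coe_finset]
  rintro ⟨x, y⟩ h ⟨x', y'⟩ h' e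
  simp only [magT, Finset.mem_coe, Finset.mem_filter, Finset.mem_product, Finset.mem_Icc] at h h'
  have e1 := congrFun (congrFun e 0) 0
  have e2 := congrFun (congrFun e 0) 2
  simp [magG] at e1 e2
  rw [Prod.mk.injEq]
  omega

open PowerSeries in
/-- Generating function identity: if `c s` counts the magic squares of order 3
with magic number `3s`, then
`(1−t)(1−t²)(1−t³) Σ c(s) tˢ = 8t⁴(1+2t)` as formal power series over `ℤ`. -/
theorem magic_square_generating_function (c : ℕ → ℕ)
    (hc : ∀ s, c s = {M : Matrix (Fin 3) (Fin 3) ℕ | IsMagic M (3 * s)}.ncard) :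
    (1 - (X : PowerSeries ℤ)) * (1 - X ^ 2) * (1 - X ^ 3) *
        PowerSeries.mk (fun s => (c s : ℤ)) =
      8 * X ^ 4 * (1 + 2 * X) := by
  have hc' : ∀ s, c s = 8 * ∑ n ∈ Finset.range (s + 1), (magD n).card := fun s => by
    rw [hc, mag_count, magT_card]
  have h1 : (1 - (X : PowerSeries ℤ)) * PowerSeries.mk (fun s => (c s : ℤ))
      = PowerSeries.mk (fun n => 8 * ((magD n).card : ℤ)) := by
    ext n
    rw [sub_mul, one_mul, map_sub]
    rcases n with _ | n
    · simp [hc']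
    · rw [PowerSeries.coeff_succ_X_mul]
      simp only [PowerSeries.coeff_mk, hc']
      rw [Finset.sum_range_succ _ (n + 1)]
      push_cast
      ring
  have h2 : (1 - (X : PowerSeries ℤ)) * (1 - X ^ 2) * (1 - X ^ 3) *
        PowerSeries.mk (fun s => (c s : ℤ))
      = PowerSeries.mk (fun n => 8 * ((magD n).card : ℤ))
        - X ^ 2 * PowerSeries.mk (fun n => 8 * ((magD n).card : ℤ))
        - X ^ 3 * PowerSeries.mk (fun n => 8 * ((magD n).card : ℤ))
        + X ^ 5 * PowerSeries.mk (fun n => 8 * ((magD n).card : ℤ)) := by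
    rw [← h1]; ring
  have h3 : (8 * X ^ 4 * (1 + 2 * X) : PowerSeries ℤ)
      = PowerSeries.C (8 : ℤ) * X ^ 4 + PowerSeries.C (16 : ℤ) * X ^ 5 := by
    have e8 : PowerSeries.C (8 : ℤ) = 8 := map_ofNat _ 8
    have e16 : PowerSeries.C (16 : ℤ) = 16 := map_ofNat _ 16
    rw [e8, e16]; ring
  rw [h2, h3]
  ext n
  simp only [map_sub, map_add, PowerSeries.coeff_X_pow_mul', PowerSeries.coeff_C_mul,
    PowerSeries.coeff_X_pow, PowerSeries.coeff_mk, magD_card]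
  by_cases hn : n < 6
  · interval_cases n <;> simp
  · obtain ⟨m, rfl⟩ : ∃ m, n = m + 6 := ⟨n - 6, by omega⟩
    split_ifs <;> omega
end

section
/- If M = [[a₁,a₂,a₃],[b₁,b₂,b₃],[c₁,c₂,c₃]] is a reduced magic square of order 3, then a₂ = 0 and c₂ = 2·b₂. -/
open Matrix Finset

/-- A reduced magic square of order 3: a magic square one of whose entries
is 0, and with `c₃ < a₁`, `c₃ < a₃`, `c₃ < c₁`, `c₁ < a₃`. -/
def IsReducedMagic (M : Matrix (Fin 3) (Fin 3) ℕ) : Prop :=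
  IsMagicSquare M ∧ (∃ i j, M i j = 0) ∧
  M 2 2 < M 0 0 ∧ M 2 2 < M 0 2 ∧ M 2 2 < M 2 0 ∧ M 2 0 < M 0 2

/-- In a reduced magic square, `a₂ = 0` and `c₂ = 2·b₂`. -/
theorem reduced_top_middle_zero (M : Matrix (Fin 3) (Fin 3) ℕ)
    (h : IsReducedMagic M) : M 0 1 = 0 ∧ M 2 1 = 2 * M 1 1 := by
  obtain ⟨⟨m, -, hr, hc, hd, ha⟩, ⟨i, j, h0⟩, h1, h2, h3, h4⟩ := h
  have r0 := hr 0
  have r1 := hr 1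
  have r2 := hr 2
  have c0 := hc 0
  have c1 := hc 1
  have c2 := hc 2
  have e0 : (0 : Fin 3).rev = 2 := rfl
  have e1 : (1 : Fin 3).rev = 1 := rfl
  have e2 : (2 : Fin 3).rev = 0 := rfl
  simp only [Fin.sum_univ_three, e0, e1, e2] at r0 r1 r2 c0 c1 c2 hd ha
  have key : M 0 1 = 0 := by
    fin_cases i <;> fin_cases j <;> simp at h0 <;> omega
  omega
end

section
/- If M is a reduced magic square of order 3, then there exist integers α ≥ −1 and β ≥ 0 such that M = T₁ + α·C + β·D (as matrices with integer entries). -/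
open Matrix Finset

def Cz : Matrix (Fin 3) (Fin 3) ℤ := !![2,0,1; 0,1,2; 1,2,0]
def Dz : Matrix (Fin 3) (Fin 3) ℤ := !![3,0,3; 2,2,2; 1,4,1]
def T1z : Matrix (Fin 3) (Fin 3) ℤ := !![7,0,5; 2,4,6; 3,8,1]

/-- Every reduced magic square can be written as `T₁ + α·C + β·D` with
integers `α ≥ −1` and `β ≥ 0`. -/
theorem reduced_magic_square_decomposition (M : Matrix (Fin 3) (Fin 3) ℕ)
    (h : IsReducedMagic M) :
    ∃ α β : ℤ, -1 ≤ α ∧ 0 ≤ β ∧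
      M.map (Nat.cast : ℕ → ℤ) = T1z + α • Cz + β • Dz := by
  obtain ⟨⟨m, hinj, hr, hc, hd, he⟩, ⟨i, j, hz⟩, h1, h2, h3, h4⟩ := h
  have hne : M 0 1 ≠ M 1 0 := by
    intro hh
    have := @hinj (0, 1) (1, 0) hh
    simp at this
  have r0 := hr 0
  have r1 := hr 1
  have r2 := hr 2
  have c0 := hc 0
  have c1 := hc 1
  have c2 := hc 2
  have e0 : Fin.rev (0 : Fin 3) = 2 := rfl
  have e1 : Fin.rev (1 : Fin 3) = 1 := rfl
  have e2 : Fin.rev (2 : Fin 3) = 0 := rfl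
  simp only [Fin.sum_univ_three, e0, e1, e2] at r0 r1 r2 c0 c1 c2 hd he
  clear hinj hr hc e0 e1 e2
  have hA : M 0 1 = 0 := by
    fin_cases i <;> fin_cases j <;> simp at hz <;> omega
  refine ⟨(M 1 1 : ℤ) - 2 - 2 * M 2 2, (M 2 2 : ℤ) - 1, by omega, by omega, ?_⟩
  ext a b
  fin_cases a <;> fin_cases b <;> simp [T1z, Cz, Dz] <;> omega
end

section
/- If M = [[a₁,a₂,a₃],[b₁,b₂,b₃],[c₁,c₂,c₃]] is a reduced magic square of order 3, then a₂ < b₁, a₂ < c₂, and a₂ < b₃. -/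
open Matrix Finset

/-- In a reduced magic square, `a₂ < b₁`, `a₂ < c₂` and `a₂ < b₃`. -/
theorem reduced_a2_small (M : Matrix (Fin 3) (Fin 3) ℕ)
    (h : IsReducedMagic M) :
    M 0 1 < M 1 0 ∧ M 0 1 < M 2 1 ∧ M 0 1 < M 1 2 := by
  obtain ⟨⟨m, _, hr, hc, hd, ha⟩, _, h1, h2, h3, h4⟩ := h
  have r0 := hr 0
  have r1 := hr 1
  have r2 := hr 2
  have c0 := hc 0
  have c1 := hc 1
  have c2 := hc 2
  have e0 : (0 : Fin 3).rev = 2 := rfl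
  have e1 : (1 : Fin 3).rev = 1 := rfl
  have e2 : (2 : Fin 3).rev = 0 := rfl
  simp only [Fin.sum_univ_three, e0, e1, e2] at r0 r1 r2 c0 c1 c2 hd ha
  omega
end

section
/- If M = [[a₁,a₂,a₃],[b₁,b₂,b₃],[c₁,c₂,c₃]] is a reduced magic square of order 3, then the center entry satisfies b₂ ≥ 4. -/
open Matrix Finset

/-- In a reduced magic square, the center entry is at least `4`. -/
theorem reduced_center_ge_four (M : Matrix (Fin 3) (Fin 3) ℕ)
    (h : IsReducedMagic M) : 4 ≤ M 1 1 := by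
  obtain ⟨⟨m, hinj, hr, hc, hd, ha⟩, -⟩ := h
  have r0 := hr 0
  have r1 := hr 1
  have r2 := hr 2
  have c0 := hc 0
  have c1 := hc 1
  have c2 := hc 2
  have e0 : (0 : Fin 3).rev = 2 := rfl
  have e1 : (1 : Fin 3).rev = 1 := rfl
  have e2 : (2 : Fin 3).rev = 0 := rfl
  simp only [Fin.sum_univ_three, e0, e1, e2] at r0 r1 r2 c0 c1 c2 hd ha
  -- every entry is at most twice the center
  have hle : ∀ i j, M i j < 2 * M 1 1 + 1 := by
    intro i j
    fin_cases i <;> fin_cases j <;> simp <;> omega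
  have hcard := Finset.card_le_card_of_injOn (s := Finset.univ)
    (t := Finset.range (2 * M 1 1 + 1)) (fun p : Fin 3 × Fin 3 => M p.1 p.2)
    (fun p _ => by simpa using hle p.1 p.2) hinj.injOn
  simp at hcard
  omega
end

section
/- If M = [[a₁,a₂,a₃],[b₁,b₂,b₃],[c₁,c₂,c₃]] is a reduced magic square of order 3, then c₃ ≥ 1; that is, the corner entry c₃ is not 0. -/
open Matrix Finset

/-- In a reduced magic square, the corner entry `c₃` is not `0`. -/
theorem reduced_c3_pos (M : Matrix (Fin 3) (Fin 3) ℕ)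
    (h : IsReducedMagic M) : 1 ≤ M 2 2 := by
  obtain ⟨⟨m, -, hr, hc, hd, hd'⟩, -, h1, h2, h3, h4⟩ := h
  have r0 := hr 0
  have r1 := hr 1
  have r2 := hr 2
  have c0 := hc 0
  have c1 := hc 1
  have c2 := hc 2
  have e0 : (0 : Fin 3).rev = 2 := rfl
  have e1 : (1 : Fin 3).rev = 1 := rfl
  have e2 : (2 : Fin 3).rev = 0 := rfl
  simp only [Fin.sum_univ_three, e0, e1, e2] at r0 r1 r2 c0 c1 c2 hd hd'
  omega
end

section
/- If M = [[a₁,a₂,a₃],[b₁,b₂,b₃],[c₁,c₂,c₃]] is a reduced magic square of order 3 with c₃ = r and b₂ = s, then M = [[2s−r, 0, s+r],[2r, s, 2s−2r],[s−r, 2s, r]]. -/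
open Matrix Finset

/-- A reduced magic square with `c₃ = r` and `b₂ = s` is completely determined:
it equals `[[2s−r, 0, s+r], [2r, s, 2s−2r], [s−r, 2s, r]]`. -/
theorem reduced_magic_square_entries (M : Matrix (Fin 3) (Fin 3) ℕ)
    (h : IsReducedMagic M) (r s : ℕ) (hr : M 2 2 = r) (hs : M 1 1 = s) :
    M.map (Nat.cast : ℕ → ℤ) =
      !![2 * (s : ℤ) - r, 0, (s : ℤ) + r;
         2 * (r : ℤ), (s : ℤ), 2 * (s : ℤ) - 2 * r;
         (s : ℤ) - r, 2 * (s : ℤ), (r : ℤ)] := by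
  obtain ⟨⟨m, -, hrow, hcol, hd, he⟩, ⟨i, j, h0⟩, h1, h2, h3, h4⟩ := h
  have r0 := hrow 0
  have r1 := hrow 1
  have r2 := hrow 2
  have c0 := hcol 0
  have c1 := hcol 1
  have c2 := hcol 2
  have e0 : (0 : Fin 3).rev = 2 := rfl
  have e1 : (1 : Fin 3).rev = 1 := rfl
  have e2 : (2 : Fin 3).rev = 0 := rfl
  simp only [Fin.sum_univ_three, e0, e1, e2] at r0 r1 r2 c0 c1 c2 hd he
  -- the top middle entry is the smallest one, so it is the zero entry
  have hz : M 0 1 = 0 := by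
    fin_cases i <;> fin_cases j <;> simp at h0 <;> omega
  ext a b
  fin_cases a <;> fin_cases b <;> simp <;> omega
end

section
/- For all nonnegative integers i, j, k, the matrix T₁ + i·A + j·B + k·C, which equals [[7+i+5j+2k, i, 5+i+4j+k],[2+i+2j, 4+i+3j+k, 6+i+4j+2k],[3+i+2j+k, 8+i+6j+2k, 1+i+j]], is a magic square of order 3 (in particular its nine entries are pairwise distinct). -/
open Matrix Finset

/-- For all nonnegative integers `i, j, k`, the matrix `T₁ + i·A + j·B + k·C`
equals the displayed matrix and is a magic square of order 3. -/
theorem type_one_is_magic (i j k : ℕ) :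
    T1 + i • A + j • B + k • C =
      !![7+i+5*j+2*k, i, 5+i+4*j+k;
         2+i+2*j, 4+i+3*j+k, 6+i+4*j+2*k;
         3+i+2*j+k, 8+i+6*j+2*k, 1+i+j] ∧
    IsMagicSquare (T1 + i • A + j • B + k • C) := by
  have h : T1 + i • A + j • B + k • C =
      !![7+i+5*j+2*k, i, 5+i+4*j+k;
         2+i+2*j, 4+i+3*j+k, 6+i+4*j+2*k;
         3+i+2*j+k, 8+i+6*j+2*k, 1+i+j] := by
    ext a b
    fin_cases a <;> fin_cases b <;> simp [T1, A, B, C] <;> ring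
  refine ⟨h, ?_⟩
  rw [h]
  refine ⟨12 + 3*i + 9*j + 3*k, ?_, ?_, ?_, ?_, ?_⟩
  · rintro ⟨a, b⟩ ⟨c, d⟩ hab
    fin_cases a <;> fin_cases b <;> fin_cases c <;> fin_cases d <;>
      first
      | rfl
      | (exfalso; simp at hab; done)
      | (exfalso; simp at hab; omega)
  · intro a
    fin_cases a <;> simp [Fin.sum_univ_three] <;> ring
  · intro a
    fin_cases a <;> simp [Fin.sum_univ_three] <;> ring
  · simp [Fin.sum_univ_three]; ring
  · have h0 : (0 : Fin 3).rev = 2 := rfl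
    have h1 : (1 : Fin 3).rev = 1 := rfl
    have h2 : (2 : Fin 3).rev = 0 := rfl
    rw [Fin.sum_univ_three, h0, h1, h2]
    simp; ring
end

section
/- Every magic square of order 3 with magic number 12 is obtained from T₁ = [[7,0,5],[2,4,6],[3,8,1]] by applying a transformation in the dihedral group of order 8 (generated by rotation by 90 degrees and reflection, acting on the entries of a 3×3 matrix); in particular, there are exactly 8 magic squares of order 3 with magic number 12. -/
open Matrix Finset

/-- The finset of the eight images of `T1`. -/
def squares : Finset (Matrix (Fin 3) (Fin 3) ℕ) :=
  (Finset.range 4).image (fun n => rot^[n] T1) ∪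
    (Finset.range 4).image (fun n => rot^[n] (reflect T1))

lemma squares_card : squares.card = 8 := by decide +kernel

lemma squares_magic : ∀ M ∈ squares, IsMagic M 12 := by
  unfold IsMagic Function.Injective
  decide +kernel

lemma mem_squares_iff (M : Matrix (Fin 3) (Fin 3) ℕ) :
    M ∈ squares ↔ ∃ g ∈ Dih8, M = g T1 := by
  simp only [squares, Dih8, Finset.mem_union, Finset.mem_image, Finset.mem_range,
    Set.mem_setOf_eq]
  constructor
  · rintro (⟨n, hn, rfl⟩ | ⟨n, hn, rfl⟩)
    · exact ⟨_, ⟨n, by omega, Or.inl rfl⟩, rfl⟩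
    · exact ⟨_, ⟨n, by omega, Or.inr rfl⟩, rfl⟩
  · rintro ⟨g, ⟨n, hn, rfl | rfl⟩, rfl⟩
    · exact Or.inl ⟨n, by omega, rfl⟩
    · exact Or.inr ⟨n, by omega, rfl⟩

lemma magic_mem (M : Matrix (Fin 3) (Fin 3) ℕ) (h : IsMagic M 12) : M ∈ squares := by
  obtain ⟨hinj, hr, hc, hd, he⟩ := h
  have ne : ∀ p q : Fin 3 × Fin 3, p ≠ q → M p.1 p.2 ≠ M q.1 q.2 :=
    fun p q hpq h => hpq (hinj h)
  have n1 := ne (0,0) (0,1) (by decide)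
  have n2 := ne (0,0) (0,2) (by decide)
  have n3 := ne (0,0) (1,0) (by decide)
  have n4 := ne (0,0) (1,1) (by decide)
  have n5 := ne (0,1) (0,2) (by decide)
  have n6 := ne (0,1) (1,1) (by decide)
  have n7 := ne (0,2) (1,1) (by decide)
  have n8 := ne (1,0) (1,1) (by decide)
  have n9 := ne (0,0) (1,2) (by decide)
  have n10 := ne (0,0) (2,1) (by decide)
  have n11 := ne (0,1) (1,0) (by decide)
  have n12 := ne (0,1) (1,2) (by decide)
  have n13 := ne (0,2) (1,2) (by decide)
  have n14 := ne (0,2) (1,0) (by decide)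
  have n15 := ne (0,1) (2,0) (by decide)
  have r0 := hr 0
  have r1 := hr 1
  have r2 := hr 2
  have c0 := hc 0
  have c1 := hc 1
  have c2 := hc 2
  have e0 : (0 : Fin 3).rev = 2 := rfl
  have e1 : (1 : Fin 3).rev = 1 := rfl
  have e2 : (2 : Fin 3).rev = 0 := rfl
  simp only [Fin.sum_univ_three, e0, e1, e2] at r0 r1 r2 c0 c1 c2 hd he
  clear hr hc ne hinj
  have hM : M = !![M 0 0, M 0 1, M 0 2; M 1 0, M 1 1, M 1 2; M 2 0, M 2 1, M 2 2] :=
    Matrix.eta_fin_three M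
  rw [hM]
  dsimp only at *
  clear hM
  generalize M 0 0 = a at *
  generalize M 0 1 = b at *
  generalize M 0 2 = c at *
  generalize M 1 0 = d at *
  generalize M 1 1 = e at *
  generalize M 1 2 = f at *
  generalize M 2 0 = g at *
  generalize M 2 1 = h at *
  generalize M 2 2 = i at *
  obtain rfl : e = 4 := by omega
  have ha : a ≤ 8 := by omega
  have hb : b ≤ 8 := by omega
  obtain rfl : i = 8 - a := by omega
  obtain rfl : h = 8 - b := by omega
  obtain rfl : c = 12 - a - b := by omega
  obtain rfl : g = a + b - 4 := by omega
  obtain rfl : f = 2 * a + b - 8 := by omega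
  obtain rfl : d = 16 - 2 * a - b := by omega
  interval_cases a <;> interval_cases b <;> first | omega | decide +kernel

/-- Every magic square of order 3 with magic number `12` is obtained from `T₁`
by a rotation or reflection; in particular there are exactly `8` of them. -/
theorem magic_number_twelve :
    (∀ M : Matrix (Fin 3) (Fin 3) ℕ, IsMagic M 12 → ∃ g ∈ Dih8, M = g T1) ∧
    {M : Matrix (Fin 3) (Fin 3) ℕ | IsMagic M 12}.ncard = 8 := by
  refine ⟨fun M h => (mem_squares_iff M).1 (magic_mem M h), ?_⟩
  have hs : {M : Matrix (Fin 3) (Fin 3) ℕ | IsMagic M 12} = (squares : Set _) := by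
    ext M
    exact ⟨magic_mem M, squares_magic M⟩
  rw [hs, Set.ncard_coe_finset, squares_card]
end

section
/- Let M be a magic square of order 3 all of whose entries are positive. Then there exists a transformation g in the dihedral group of order 8 (generated by rotation by 90 degrees and reflection, acting on the entries of a 3×3 matrix) and positive integers i, j, k such that g applied to M equals either i·A + j·B + k·C or i·A + j·B + k·D. -/
open Matrix Finset

/-- The magic line equations, positivity and the distinctness used below, spelled out. -/
def Good (N : Matrix (Fin 3) (Fin 3) ℕ) : Prop :=
  ∃ m, (N 0 0 + N 0 1 + N 0 2 = m ∧ N 1 0 + N 1 1 + N 1 2 = m ∧ N 2 0 + N 2 1 + N 2 2 = m) ∧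
    (N 0 0 + N 1 0 + N 2 0 = m ∧ N 0 1 + N 1 1 + N 2 1 = m ∧ N 0 2 + N 1 2 + N 2 2 = m) ∧
    (N 0 0 + N 1 1 + N 2 2 = m ∧ N 0 2 + N 1 1 + N 2 0 = m) ∧
    (0 < N 0 1 ∧ 0 < N 1 0 ∧ 0 < N 1 2 ∧ 0 < N 2 1) ∧
    (N 0 0 ≠ N 0 2 ∧ N 0 0 ≠ N 2 0 ∧ N 0 0 ≠ N 1 1 ∧ N 0 2 ≠ N 1 1) ∧
    (N 1 2 ≠ N 0 2 ∧ N 1 2 ≠ N 2 2 ∧ N 1 0 ≠ N 0 0 ∧ N 1 0 ≠ N 2 0 ∧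
      N 0 1 ≠ N 0 0 ∧ N 0 1 ≠ N 0 2 ∧ N 2 1 ≠ N 2 0 ∧ N 2 1 ≠ N 2 2)

lemma Good.rot {N : Matrix (Fin 3) (Fin 3) ℕ} (h : Good N) : Good (rot N) := by
  obtain ⟨m, h⟩ := h
  refine ⟨m, ?_⟩
  have e : (0 : Fin 3).rev = 2 ∧ (1 : Fin 3).rev = 1 ∧ (2 : Fin 3).rev = 0 := by decide
  simp only [_root_.rot, Matrix.of_apply, e.1, e.2.1, e.2.2]
  omega

lemma Good.reflect {N : Matrix (Fin 3) (Fin 3) ℕ} (h : Good N) : Good (reflect N) := by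
  obtain ⟨m, h⟩ := h
  refine ⟨m, ?_⟩
  have e : (0 : Fin 3).rev = 2 ∧ (1 : Fin 3).rev = 1 ∧ (2 : Fin 3).rev = 0 := by decide
  simp only [_root_.reflect, Matrix.of_apply, e.1, e.2.1, e.2.2]
  omega

/-- The normalized case: `N 0 0 > N 0 2 > N 1 1`. -/
lemma Good.repr {N : Matrix (Fin 3) (Fin 3) ℕ} (h : Good N) (h1 : N 0 2 < N 0 0)
    (h2 : N 1 1 < N 0 2) : ∃ i j k : ℕ, 0 < i ∧ 0 < j ∧ 0 < k ∧
      (N = i • A + j • B + k • C ∨ N = i • A + j • B + k • D) := by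
  obtain ⟨m, h⟩ := h
  rcases lt_or_gt_of_ne (show N 1 2 ≠ N 0 2 by omega) with h3 | h3
  · refine ⟨N 0 1, N 0 0 - N 0 2, N 0 2 - N 1 2, by omega, by omega, by omega, Or.inr ?_⟩
    ext a b
    fin_cases a <;> fin_cases b <;> simp [A, B, D] <;> omega
  · refine ⟨N 0 1, N 0 2 - N 1 1, N 1 2 - N 0 2, by omega, by omega, by omega, Or.inl ?_⟩
    ext a b
    fin_cases a <;> fin_cases b <;> simp [A, B, C] <;> omega

lemma good_of_magic {M : Matrix (Fin 3) (Fin 3) ℕ} (hM : IsMagicSquare M)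
    (hpos : ∀ i j, 0 < M i j) : Good M := by
  obtain ⟨m, hinj, hr, hc, hd, ha⟩ := hM
  have e : (0 : Fin 3).rev = 2 ∧ (1 : Fin 3).rev = 1 ∧ (2 : Fin 3).rev = 0 := by decide
  have ne : ∀ a b c d : Fin 3, (a, b) ≠ (c, d) → M a b ≠ M c d :=
    fun a b c d hne heq => hne (hinj heq)
  simp only [Fin.sum_univ_three, e.1, e.2.1, e.2.2] at hr hc hd ha
  exact ⟨m, ⟨hr 0, hr 1, hr 2⟩, ⟨hc 0, hc 1, hc 2⟩, ⟨hd, ha⟩,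
    ⟨hpos _ _, hpos _ _, hpos _ _, hpos _ _⟩,
    ⟨ne _ _ _ _ (by decide), ne _ _ _ _ (by decide), ne _ _ _ _ (by decide),
      ne _ _ _ _ (by decide)⟩,
    ⟨ne _ _ _ _ (by decide), ne _ _ _ _ (by decide), ne _ _ _ _ (by decide),
      ne _ _ _ _ (by decide), ne _ _ _ _ (by decide), ne _ _ _ _ (by decide),
      ne _ _ _ _ (by decide), ne _ _ _ _ (by decide)⟩⟩

/-- Some element of the dihedral group normalizes the square. -/
lemma Good.normalize {M : Matrix (Fin 3) (Fin 3) ℕ} (h : Good M) :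
    ∃ g ∈ Dih8, Good (g M) ∧ (g M) 0 2 < (g M) 0 0 ∧ (g M) 1 1 < (g M) 0 2 := by
  have e : (0 : Fin 3).rev = 2 ∧ (1 : Fin 3).rev = 1 ∧ (2 : Fin 3).rev = 0 := by decide
  by_contra! hc
  have k0 := hc (_root_.rot^[0]) ⟨0, by omega, Or.inl rfl⟩ h
  have k1 := hc (_root_.rot^[1]) ⟨1, by omega, Or.inl rfl⟩ h.rot
  have k2 := hc (_root_.rot^[2]) ⟨2, by omega, Or.inl rfl⟩ h.rot.rot
  have k3 := hc (_root_.rot^[3]) ⟨3, by omega, Or.inl rfl⟩ h.rot.rot.rot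
  have l0 := hc (_root_.rot^[0] ∘ _root_.reflect) ⟨0, by omega, Or.inr rfl⟩ h.reflect
  have l1 := hc (_root_.rot^[1] ∘ _root_.reflect) ⟨1, by omega, Or.inr rfl⟩ h.reflect.rot
  have l2 := hc (_root_.rot^[2] ∘ _root_.reflect) ⟨2, by omega, Or.inr rfl⟩ h.reflect.rot.rot
  have l3 := hc (_root_.rot^[3] ∘ _root_.reflect) ⟨3, by omega, Or.inr rfl⟩ h.reflect.rot.rot.rot
  simp only [Function.iterate_succ, Function.iterate_zero, Function.comp_apply, id_eq,
    _root_.rot, _root_.reflect, Matrix.of_apply, e.1, e.2.1, e.2.2] at k0 k1 k2 k3 l0 l1 l2 l3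
  obtain ⟨m, h⟩ := h
  omega

/-- Every magic square of order 3 with all entries positive, after applying a
suitable rotation or reflection, can be written as `i·A + j·B + k·C` or
`i·A + j·B + k·D` with `i, j, k` positive integers. -/
theorem positive_magic_square_of_two_types (M : Matrix (Fin 3) (Fin 3) ℕ)
    (hM : IsMagicSquare M) (hpos : ∀ i j, 0 < M i j) :
    ∃ g ∈ Dih8, ∃ i j k : ℕ, 0 < i ∧ 0 < j ∧ 0 < k ∧
      (g M = i • A + j • B + k • C ∨ g M = i • A + j • B + k • D) := by
  obtain ⟨g, hg, hG, h1, h2⟩ := (good_of_magic hM hpos).normalize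
  exact ⟨g, hg, hG.repr h1 h2⟩
end
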